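/- Let p be a prime, n a natural number, and A = ℤ[x₁, …, xₙ] the polynomial ring in n variables over ℤ, with 𝔽_p = ℤ/p regarded as an A-module via the ring map A → 𝔽_p that evaluates each variable at 0 and reduces modulo p. Then Ext_A^i(𝔽_p, A) = 0 for all i ≠ n + 1, and Ext_A^{n+1}(𝔽_p, A) is isomorphic to 𝔽_p as an A-module. -/

import Mathlib

/-!
The module `𝔽_p` is the quotient of `A = ℤ[x₁, …, xₙ]` by the sequence `x₁, …, xₙ, p`, which is
regular: each term is a nonzerodivisor modulo the previous ones. Say that a module `M` is
concentrated in degree `k` if `Ext^i(M, A) = 0` for `i ≠ k` and `Ext^k(M, A) ≅ M` (`ExtConc`). The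
module `A` is projective, hence concentrated in degree `0`. If `M` is concentrated in degree `k` and
`x` is a nonzerodivisor on `M`, then in the long exact sequence of `Ext(-, A)` for
`0 → M → M → M / x M → 0` multiplication by `x` is injective on every `Ext^i(M, A)`, so
`Ext^{i+1}(M / x M, A) ≅ Ext^i(M, A) / x` and `M / x M` is concentrated in degree `k + 1`
(`extConc_of_shortExact`). Applying this to the `n + 1` terms of the sequence shows that `𝔽_p` is
concentrated in degree `n + 1`.

Mathlib's long exact sequence is available for `Abelian.Ext`, defined through the derived category,
whereas `extA` uses the left derived functors of `Hom(-, Y)`. The two are identified by `extEquiv`: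
both are computed by cocycles modulo coboundaries on a projective resolution.
-/

open CategoryTheory

/-- `extA A i M N` is the `A`-module `Ext_A^i(M, N)`, computed in the abelian category of
`A`-modules via the derived functor `Ext` bifunctor. -/
noncomputable abbrev extA (A : Type) [CommRing A] (i : ℕ) (M N : Type)
    [AddCommGroup M] [Module A M] [AddCommGroup N] [Module A N] : ModuleCat A :=
  ((Ext A (ModuleCat A) i).obj (Opposite.op (ModuleCat.of A M))).obj (ModuleCat.of A N)

/-- `𝔽_p = ℤ/p` as a module over the polynomial ring `ℤ[x₁, …, xₙ]`, via the ring map that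
evaluates each variable at `0` and reduces integers modulo `p`. -/
noncomputable instance zmodEvalZeroModule (p : ℕ) (n : ℕ) :
    Module (MvPolynomial (Fin n) ℤ) (ZMod p) :=
  Module.compHom (ZMod p)
    ((Int.castRingHom (ZMod p)).comp (MvPolynomial.eval (0 : Fin n → ℤ)))

/-! ### Comparison of the two definitions of `Ext` -/

/-- A cocycle on a projective resolution represents zero in `Ext` iff it is a coboundary, with
the incoming differential indexed by `(ComplexShape.up ℕ).prev n`. In degree `0` that index is
`0` again and the differential is zero, so the condition reads `f = 0`. -/
lemma extMk_eq_zero_iff' {A : Type} [CommRing A] {X Y : ModuleCat.{0} A}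
    (P : ProjectiveResolution X) (n : ℕ) (f : P.complex.X n ⟶ Y)
    (hf : P.complex.d (n + 1) n ≫ f = 0) :
    P.extMk f (n + 1) rfl hf = 0 ↔
      ∃ g : P.complex.X ((ComplexShape.up ℕ).prev n) ⟶ Y, P.complex.d n _ ≫ g = f := by
  cases n with
  | succ n =>
    rw [P.extMk_eq_zero_iff f _ rfl hf n rfl, CochainComplex.prev_nat_succ]
  | zero =>
    rw [CochainComplex.prev_nat_zero, P.complex.shape 0 0 (by simp)]
    constructor
    · intro h
      refine ⟨0, ?_⟩
      have h2 := congrArg P.extEquivCohomologyClass h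
      simp only [ProjectiveResolution.extEquivCohomologyClass_extMk,
        ProjectiveResolution.extEquivCohomologyClass_zero,
        CochainComplex.HomComplex.CohomologyClass.mk_eq_zero_iff] at h2
      rw [CochainComplex.HomComplex.Cocycle.toSingleMk_mem_coboundaries_iff _ _ _ _ _ 1
        (by simp)] at h2
      obtain ⟨g, hg⟩ := h2
      -- the resolution is concentrated in cohomological degrees `≤ 0`
      have : g = 0 := (P.cochainComplex.isZero_of_isStrictlyLE 0 1).eq_of_src _ _
      rw [this] at hg
      rw [← cancel_epi (P.cochainComplexXIso (-((0 : ℕ) : ℤ)) 0 rfl).hom, ← hg]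
      simp
    · rintro ⟨g, hg⟩
      obtain rfl : f = 0 := by rw [← hg]; simp
      simp

lemma mem_ker_linearYonedaObj_iff {A : Type} [CommRing A] {X Y : ModuleCat.{0} A}
    (P : ProjectiveResolution X) (n : ℕ) (f : ((P.complex.linearYonedaObj A Y).sc n).X₂) :
    f ∈ LinearMap.ker ((P.complex.linearYonedaObj A Y).sc n).g.hom ↔
      P.complex.d (n + 1) n ≫ (show P.complex.X n ⟶ Y from f) = 0 := by
  rw [LinearMap.mem_ker]
  change (P.complex.linearYonedaObj A Y).d n ((ComplexShape.up ℕ).next n) f = 0 ↔ _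
  rw [CochainComplex.next ℕ n]
  rfl

/-- The map sending an `n`-cocycle of `Hom(P, Y)`, for a projective resolution `P` of `X`, to its
class in the `Ext` group defined through the derived category. -/
noncomputable def cocyclesToExt {A : Type} [CommRing A] {X Y : ModuleCat.{0} A}
    (P : ProjectiveResolution X) (n : ℕ) :
    LinearMap.ker ((P.complex.linearYonedaObj A Y).sc n).g.hom →ₗ[A] Abelian.Ext X Y n where
  toFun f := P.extMk (n := n) (Y := Y) f.1 (n + 1) rfl
    ((mem_ker_linearYonedaObj_iff P n f.1).1 f.2)
  map_add' f g := (P.add_extMk _ _ _ _ _ _).symm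
  map_smul' r f := by
    refine Eq.trans ?_ (Abelian.Ext.smul_eq_comp_mk₀ _ r).symm
    refine Eq.trans ?_ (P.extMk_comp_mk₀ _ _ rfl
      ((mem_ker_linearYonedaObj_iff P n f.1).1 f.2) (r • 𝟙 Y)).symm
    congr 1

lemma exact_cocyclesToExt {A : Type} [CommRing A] {X Y : ModuleCat.{0} A}
    (P : ProjectiveResolution X) (n : ℕ) :
    Function.Exact ((P.complex.linearYonedaObj A Y).sc n).moduleCatToCycles
      (cocyclesToExt (Y := Y) P n) := by
  intro f
  refine (extMk_eq_zero_iff' P n f.1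
    ((mem_ker_linearYonedaObj_iff P n f.1).1 f.2)).trans ⟨?_, ?_⟩
  · rintro ⟨g, hg⟩
    exact ⟨g, Subtype.ext hg⟩
  · rintro ⟨g, hg⟩
    exact ⟨g, congrArg Subtype.val hg⟩

lemma cocyclesToExt_surjective {A : Type} [CommRing A] {X Y : ModuleCat.{0} A}
    (P : ProjectiveResolution X) (n : ℕ) :
    Function.Surjective (cocyclesToExt (Y := Y) P n) := by
  intro α
  obtain ⟨f, hf, rfl⟩ := P.extMk_surjective α (n + 1) rfl
  exact ⟨⟨f, (mem_ker_linearYonedaObj_iff P n f).2 hf⟩, rfl⟩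

/-- The `Ext` module obtained by left-deriving `Hom(-, Y)` agrees, linearly over `A`, with the one
defined through the derived category: on a projective resolution of `X`, both are cocycles modulo
coboundaries. -/
noncomputable def extEquiv {A : Type} [CommRing A] (X Y : ModuleCat.{0} A) (n : ℕ) :
    ((Ext A (ModuleCat.{0} A) n).obj (Opposite.op X)).obj Y ≃ₗ[A] Abelian.Ext X Y n :=
  let P := projectiveResolution X
  ((P.isoExt n Y) ≪≫
    ((P.complex.linearYonedaObj A Y).sc n).moduleCatHomologyIso).toLinearEquiv.trans
      ((exact_cocyclesToExt P n).linearEquivOfSurjective (cocyclesToExt_surjective P n))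

/-! ### Modules with `Ext` concentrated in one degree -/

/-- `Ext^i(M, N)` vanishes for `i ≠ k`, and `Ext^k(M, N)` is isomorphic to `M` itself: over
`N = A` the module `M` is self-dual, up to a shift by `k`. -/
def ExtConc {A : Type} [CommRing A] (M : ModuleCat.{0} A) (N : ModuleCat.{0} A) (k : ℕ) : Prop :=
  (∀ i : ℕ, i ≠ k → Subsingleton (Abelian.Ext M N i)) ∧ Nonempty (Abelian.Ext M N k ≃ₗ[A] M)

lemma ExtConc.congr {A : Type} [CommRing A] {M M' : ModuleCat.{0} A} {N : ModuleCat.{0} A} {k : ℕ}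
    (h : ExtConc M N k) (e : M ≃ₗ[A] M') : ExtConc M' N k := by
  have e' : ∀ i, Abelian.Ext M N i ≃ₗ[A] Abelian.Ext M' N i := fun i =>
    LinearEquiv.ofLinearMap
      (Abelian.Ext.bilinearCompOfLinear A _ _ _ 0 i i (zero_add i)
        (Abelian.Ext.mk₀ e.toModuleIso.inv))
      (Abelian.Ext.bilinearCompOfLinear A _ _ _ 0 i i (zero_add i)
        (Abelian.Ext.mk₀ e.toModuleIso.hom))
      (by
        ext y
        change (Abelian.Ext.mk₀ e.toModuleIso.inv).comp
          ((Abelian.Ext.mk₀ e.toModuleIso.hom).comp y (zero_add i)) (zero_add i) = y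
        rw [Abelian.Ext.mk₀_comp_mk₀_assoc, Iso.inv_hom_id, Abelian.Ext.mk₀_id_comp])
      (by
        ext y
        change (Abelian.Ext.mk₀ e.toModuleIso.hom).comp
          ((Abelian.Ext.mk₀ e.toModuleIso.inv).comp y (zero_add i)) (zero_add i) = y
        rw [Abelian.Ext.mk₀_comp_mk₀_assoc, Iso.hom_inv_id, Abelian.Ext.mk₀_id_comp])
  exact ⟨fun i hi => have := h.1 i hi; (e' i).symm.toEquiv.subsingleton,
    h.2.map fun f => ((e' k).symm.trans f).trans e⟩

/-- In the long exact sequence of `0 → M → M → M' → 0`, multiplication by `x` is injective on every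
`Ext^i(M, N)`: these are zero, or isomorphic to `M`, on which `x` is regular. Hence the connecting
map identifies `Ext^{i+1}(M', N)` with `Ext^i(M, N) / x`. -/
lemma extConc_of_shortExact {A : Type} [CommRing A] {M M' N : ModuleCat.{0} A} {k : ℕ}
    (h : ExtConc M N k) {x : A} (hx : IsSMulRegular M x) (g : M ⟶ M') (w : (x • 𝟙 M) ≫ g = 0)
    (hS : (ShortComplex.mk (x • 𝟙 M) g w).ShortExact) (e' : QuotSMulTop x M ≃ₗ[A] M') :
    ExtConc M' N (k + 1) := by
  obtain ⟨hv, ⟨e⟩⟩ := h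
  have hreg : ∀ i (y : Abelian.Ext M N i), x • y = 0 → y = 0 := by
    intro i y hy
    by_cases hi : i = k
    · subst hi
      apply e.injective
      rw [map_zero]
      apply hx
      simp only [smul_zero, ← map_smul, hy, map_zero]
    · have := hv i hi
      exact Subsingleton.elim _ _
  have hf : ∀ i (y : Abelian.Ext M N i),
      (Abelian.Ext.mk₀ (x • 𝟙 M)).comp y (zero_add i) = x • y := by
    intro i y
    rw [Abelian.Ext.mk₀_smul, Abelian.Ext.smul_comp, Abelian.Ext.mk₀_id_comp]
  -- injectivity of `x` forces `g` to induce the zero map `Ext^i(M', N) → Ext^i(M, N)`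
  have hg : ∀ i (y : Abelian.Ext M' N i), (Abelian.Ext.mk₀ g).comp y (zero_add i) = 0 := by
    intro i y
    apply hreg i
    rw [← hf, Abelian.Ext.mk₀_comp_mk₀_assoc, w, Abelian.Ext.mk₀_zero, Abelian.Ext.zero_comp]
  let δ : Abelian.Ext M N k →ₗ[A] Abelian.Ext M' N (k + 1) :=
    Abelian.Ext.bilinearCompOfLinear A _ _ _ 1 k (k + 1) (add_comm 1 k) hS.extClass
  have δs : Function.Surjective δ := fun y =>
    Abelian.Ext.contravariant_sequence_exact₃ hS N y (hg _ _) (add_comm 1 k)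
  have hker : LinearMap.ker δ = LinearMap.range (LinearMap.lsmul A (Abelian.Ext M N k) x) := by
    ext y
    rw [LinearMap.mem_ker, LinearMap.mem_range]
    constructor
    · intro hy
      obtain ⟨z, hz⟩ := Abelian.Ext.contravariant_sequence_exact₁ hS N y (add_comm 1 k) hy
      exact ⟨z, (hf k z).symm.trans hz⟩
    · rintro ⟨z, rfl⟩
      rw [LinearMap.lsmul_apply, ← hf]
      exact hS.extClass_comp_assoc z (h := add_comm 1 k)
  constructor
  · intro i hi
    refine subsingleton_of_forall_eq 0 fun y => ?_
    cases i with
    | zero =>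
      obtain ⟨y, rfl⟩ := Abelian.Ext.homEquiv₀.symm.surjective y
      have h0 := hg 0 (Abelian.Ext.homEquiv₀.symm y)
      have := hS.epi_g
      apply Abelian.Ext.precomp_mk₀_injective_of_epi N g
      simpa using h0
    | succ i =>
      obtain ⟨z, rfl⟩ := Abelian.Ext.contravariant_sequence_exact₃ hS N y (hg _ _) (add_comm 1 i)
      have := hv i (by omega)
      rw [Subsingleton.elim (α := Abelian.Ext M N i) z 0, Abelian.Ext.comp_zero]
  · refine ⟨(δ.quotKerEquivOfSurjective δs).symm.trans
      ((Submodule.Quotient.equiv _ _ e ?_).trans e')⟩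
    rw [hker]
    ext m
    simp only [Submodule.mem_map, LinearMap.mem_range, LinearMap.lsmul_apply,
      Submodule.mem_smul_pointwise_iff_exists]
    constructor
    · rintro ⟨_, ⟨z, rfl⟩, rfl⟩
      exact ⟨e z, trivial, by simp⟩
    · rintro ⟨z, -, rfl⟩
      exact ⟨_, ⟨e.symm z, rfl⟩, by simp⟩

lemma extConc_quotSMulTop {A : Type} [CommRing A] {M N : ModuleCat.{0} A} {k : ℕ}
    (h : ExtConc M N k) {x : A} (hx : IsSMulRegular M x) :
    ExtConc (ModuleCat.of A (QuotSMulTop x M)) N (k + 1) :=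
  extConc_of_shortExact h hx (M.smulShortComplex x).g (M.smulShortComplex x).zero
    hx.smulShortComplex_shortExact (LinearEquiv.refl _ _)

/-- Each term of a weakly regular sequence raises the degree by one. -/
lemma extConc_weaklyRegular {A : Type} [CommRing A] {N : ModuleCat.{0} A} (rs : List A) :
    ∀ (M : ModuleCat.{0} A) (k : ℕ), ExtConc M N k → RingTheory.Sequence.IsWeaklyRegular M rs →
    ExtConc (ModuleCat.of A (M ⧸ Ideal.ofList rs • (⊤ : Submodule A M))) N (rs.length + k) := by
  induction rs with
  | nil =>
    intro M k h _
    rw [List.length_nil, zero_add]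
    exact h.congr (Submodule.quotEquivOfEqBot _ (by simp)).symm
  | cons r rs ih =>
    intro M k h hr
    rw [RingTheory.Sequence.isWeaklyRegular_cons_iff] at hr
    have := (ih (ModuleCat.of A (QuotSMulTop r M)) (k + 1) (extConc_quotSMulTop h hr.1) hr.2).congr
      (M' := ModuleCat.of A (M ⧸ Ideal.ofList (r :: rs) • (⊤ : Submodule A M)))
      (Submodule.quotOfListConsSMulTopEquivQuotSMulTopInner M r rs).symm
    rwa [List.length_cons, add_right_comm]

lemma extConc_self (A : Type) [CommRing A] : ExtConc (ModuleCat.of A A) (ModuleCat.of A A) 0 := by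
  refine ⟨fun i hi => ?_, ⟨Abelian.Ext.linearEquiv₀.trans
    (ModuleCat.homLinearEquiv.trans (LinearMap.ringLmapEquivSelf A A A))⟩⟩
  obtain ⟨i, rfl⟩ := Nat.exists_eq_succ_of_ne_zero hi
  exact Abelian.Ext.subsingleton_of_projective _ _ _

/-! ### The regular sequence `x₁, …, xₙ, p` -/

section Polynomial

open MvPolynomial

lemma isSMulRegular_quotient {A : Type} [CommRing A] (I : Ideal A) (r : A)
    (h : ∀ f, r * f ∈ I → f ∈ I) : IsSMulRegular (A ⧸ I • (⊤ : Submodule A A)) r := by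
  have hI : I • (⊤ : Submodule A A) = I := by simp
  rw [hI, isSMulRegular_iff_right_eq_zero_of_smul]
  intro y hy
  obtain ⟨f, rfl⟩ := Submodule.Quotient.mk_surjective _ y
  rw [← Submodule.Quotient.mk_smul, Submodule.Quotient.mk_eq_zero] at hy
  exact (Submodule.Quotient.mk_eq_zero _).2 (h f hy)

lemma ofList_take_X (n i : ℕ) :
    Ideal.ofList (((List.finRange n).map (X : Fin n → MvPolynomial (Fin n) ℤ)).take i) =
      Ideal.span (X '' {j : Fin n | (j : ℕ) < i}) := by
  unfold Ideal.ofList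
  congr 1
  ext f
  rw [← List.map_take]
  simp only [List.mem_map, Set.mem_ofPred_eq, Set.mem_image]
  refine exists_congr fun j => and_congr_left fun _ => ?_
  rw [List.mem_take_iff_getElem]
  constructor
  · rintro ⟨k, hk, rfl⟩
    simp at hk ⊢
    omega
  · intro hj
    exact ⟨j, by simp [hj], by simp⟩

/-- A variable outside `s` is a nonzerodivisor modulo the ideal generated by the variables in
`s`. -/
lemma mem_of_X_mul_mem {n : ℕ} (s : Set (Fin n)) (k : Fin n) (hk : k ∉ s)
    (f : MvPolynomial (Fin n) ℤ) (h : X k * f ∈ Ideal.span (X '' s)) :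
    f ∈ Ideal.span (X '' s) := by
  rw [mem_ideal_span_X_image] at h ⊢
  intro m hm
  obtain ⟨i, hi, hne⟩ := h (Finsupp.single k 1 + m) (by
    rw [mem_support_iff, coeff_X_mul]; exact mem_support_iff.1 hm)
  refine ⟨i, hi, ?_⟩
  have : k ≠ i := fun h => hk (h ▸ hi)
  simpa [Finsupp.single_apply, this] using hne

/-- A nonzero integer is a nonzerodivisor modulo an ideal generated by variables. -/
lemma mem_of_C_mul_mem {n p : ℕ} (hp : p ≠ 0) (s : Set (Fin n))
    (f : MvPolynomial (Fin n) ℤ) (h : C (p : ℤ) * f ∈ Ideal.span (X '' s)) :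
    f ∈ Ideal.span (X '' s) := by
  rw [mem_ideal_span_X_image] at h ⊢
  intro m hm
  refine h m ?_
  rw [mem_support_iff, coeff_C_mul]
  exact mul_ne_zero (by exact_mod_cast hp) (mem_support_iff.1 hm)

/-- The sequence `x₁, …, xₙ, p` in `ℤ[x₁, …, xₙ]`, with `p` last. -/
noncomputable def genList (p n : ℕ) : List (MvPolynomial (Fin n) ℤ) :=
  (List.finRange n).map X ++ [C (p : ℤ)]

lemma isWeaklyRegular_genList {p : ℕ} (hp : p ≠ 0) (n : ℕ) :
    RingTheory.Sequence.IsWeaklyRegular (MvPolynomial (Fin n) ℤ) (genList p n) := by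
  rw [genList, RingTheory.Sequence.isWeaklyRegular_append_iff]
  constructor
  · rw [RingTheory.Sequence.isWeaklyRegular_iff]
    intro i hi
    rw [ofList_take_X]
    apply isSMulRegular_quotient
    intro f hf
    simp only [List.getElem_map, List.getElem_finRange] at hf
    exact mem_of_X_mul_mem _ _ (by simp) f hf
  · rw [RingTheory.Sequence.isWeaklyRegular_singleton_iff]
    apply isSMulRegular_quotient
    intro f hf
    have h := ofList_take_X n n
    rw [List.take_of_length_le (by simp)] at h
    rw [h] at hf ⊢
    exact mem_of_C_mul_mem hp _ f hf

/-- The `ℤ[x₁, …, xₙ]`-linear map `f ↦ f • 1` to `𝔽_p`; it reduces the constant coefficient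
modulo `p`. -/
noncomputable def toZMod (p n : ℕ) :
    MvPolynomial (Fin n) ℤ →ₗ[MvPolynomial (Fin n) ℤ] ZMod p :=
  LinearMap.toSpanSingleton _ _ 1

lemma toZMod_apply (p n : ℕ) (f : MvPolynomial (Fin n) ℤ) :
    toZMod p n f = ((constantCoeff f : ℤ) : ZMod p) := by
  change ((Int.castRingHom (ZMod p)).comp (MvPolynomial.eval (0 : Fin n → ℤ))) f * 1 = _
  simp

lemma ker_toZMod (p n : ℕ) :
    Ideal.ofList (genList p n) •
      (⊤ : Submodule (MvPolynomial (Fin n) ℤ) (MvPolynomial (Fin n) ℤ)) =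
    LinearMap.ker (toZMod p n) := by
  rw [smul_eq_mul, Ideal.mul_top]
  apply le_antisymm
  · refine Ideal.span_le.2 ?_
    intro f hf
    rw [SetLike.mem_coe, LinearMap.mem_ker, toZMod_apply]
    simp only [genList, Set.mem_ofPred_eq, List.mem_append, List.mem_map, List.mem_singleton] at hf
    obtain ⟨j, -, rfl⟩ | rfl := hf <;> simp
  · intro f hf
    rw [LinearMap.mem_ker, toZMod_apply, ZMod.intCast_zmod_eq_zero_iff_dvd] at hf
    obtain ⟨m, hm⟩ := hf
    -- a polynomial without constant term lies in the ideal of the variables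
    have h : f - C (constantCoeff f) ∈ Ideal.ofList (genList p n) := by
      have : f - C (constantCoeff f) ∈ Ideal.span (X '' (Set.univ : Set (Fin n))) := by
        rw [mem_ideal_span_X_image]
        intro u hu
        by_contra! hc
        obtain rfl : u = 0 := by ext i; simpa using hc i
        rw [mem_support_iff, coeff_sub, coeff_C, if_pos rfl, constantCoeff_eq, sub_self] at hu
        exact hu rfl
      refine Ideal.span_mono ?_ this
      rintro _ ⟨j, -, rfl⟩
      simp [genList]
    rw [← sub_add_cancel f (C (constantCoeff f)), hm, C_mul]
    rw [hm, C_mul] at h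
    refine add_mem h (Ideal.mul_mem_right _ _ (Ideal.subset_span ?_))
    simp [genList]

lemma toZMod_surjective (p n : ℕ) : Function.Surjective (toZMod p n) := by
  intro z
  obtain ⟨m, rfl⟩ := ZMod.intCast_surjective z
  exact ⟨C m, by simp [toZMod_apply]⟩

end Polynomial

/-- For a prime `p` and `A = ℤ[x₁, …, xₙ]`, with `𝔽_p = ℤ/p` an `A`-module via evaluation
of the variables at `0` and reduction mod `p`, one has `Ext_A^i(𝔽_p, A) = 0` for
`i ≠ n + 1`, and `Ext_A^{n+1}(𝔽_p, A)` is isomorphic to `𝔽_p` as an `A`-module. -/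
theorem intPolynomial_gorenstein_zmod (p : ℕ) (hp : p.Prime) (n : ℕ) :
    (∀ i : ℕ, i ≠ n + 1 →
        Subsingleton (extA (MvPolynomial (Fin n) ℤ) i (ZMod p) (MvPolynomial (Fin n) ℤ))) ∧
      Nonempty (extA (MvPolynomial (Fin n) ℤ) (n + 1) (ZMod p) (MvPolynomial (Fin n) ℤ)
        ≃ₗ[MvPolynomial (Fin n) ℤ] ZMod p) := by
  have h := extConc_weaklyRegular (genList p n)
    (ModuleCat.of (MvPolynomial (Fin n) ℤ) (MvPolynomial (Fin n) ℤ)) 0 (extConc_self _)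
    (isWeaklyRegular_genList hp.ne_zero n)
  rw [show (genList p n).length + 0 = n + 1 by simp [genList]] at h
  have h' : ExtConc (ModuleCat.of (MvPolynomial (Fin n) ℤ) (ZMod p))
      (ModuleCat.of (MvPolynomial (Fin n) ℤ) (MvPolynomial (Fin n) ℤ)) (n + 1) :=
    h.congr ((Submodule.quotEquivOfEq _ _ (ker_toZMod p n)).trans
      ((toZMod p n).quotKerEquivOfSurjective (toZMod_surjective p n)))
  exact ⟨fun i hi => have := h'.1 i hi; (extEquiv _ _ i).toEquiv.subsingleton,
    h'.2.map fun e => (extEquiv _ _ _).trans e⟩
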